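/- arXiv:1510.06785 — 2 statements merged into one kernel-verified Lean document; each statement's English description precedes it below -/
import Mathlib

section
/- Let w ∈ ℝ^N be a nonnegative weight vector with Σᵢ wᵢ = c. If the algebraic connectivity of the supra-Laplacian attains the upper bound, i.e. λ₂(L(w)) = 2c/N, then the weights are uniform: w = (c/N)𝟙. -/
/-!
The antisymmetric vector `z = (𝟙, -𝟙)` is orthogonal to the all-ones vector and has Rayleigh
quotient `4c / 2N = 2c / N`. If `λ₂` equals this value, then `z` minimizes the Rayleigh quotient on
`𝟙ᗮ`, which the supra-Laplacian preserves, so `z` is an eigenvector for `λ₂`. As `L₁` and `L₂`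
annihilate `𝟙`, the supra-Laplacian maps `z` to `(2w, -2w)`; hence `2 wᵢ = λ₂` for every `i`.
-/

open Matrix

/-- The supra-Laplacian of a two-layer multiplex with layer Laplacians `L₁`, `L₂`
and one-to-one inter-layer weights `w`: the block matrix
`[[L₁ + W, −W], [−W, L₂ + W]]` with `W = diag w`. -/
noncomputable def supraLaplacian {N : ℕ} (L₁ L₂ : Matrix (Fin N) (Fin N) ℝ)
    (w : Fin N → ℝ) : Matrix (Fin N ⊕ Fin N) (Fin N ⊕ Fin N) ℝ :=
  Matrix.fromBlocks (L₁ + Matrix.diagonal w) (-Matrix.diagonal w)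
    (-Matrix.diagonal w) (L₂ + Matrix.diagonal w)

/-- Algebraic connectivity: the minimum of `vᵀ M v` over unit vectors `v`
orthogonal to the all-ones vector (the minimum is attained, so it equals the inf). -/
noncomputable def lambda2 {n : Type*} [Fintype n] (M : Matrix n n ℝ) : ℝ :=
  sInf {x : ℝ | ∃ v : n → ℝ, v ⬝ᵥ v = 1 ∧ v ⬝ᵥ (fun _ => 1) = 0 ∧ x = v ⬝ᵥ M *ᵥ v}

section Rayleigh

variable {n : Type*} [Fintype n]

theorem norm_le_one_of_dotProduct_self_eq_one {v : n → ℝ} (hv : v ⬝ᵥ v = 1) : ‖v‖ ≤ 1 := by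
  refine (pi_norm_le_iff_of_nonneg zero_le_one).2 fun i ↦ abs_le_one_iff_mul_self_le_one.2 ?_
  calc v i * v i ≤ ∑ j, v j * v j :=
        Finset.single_le_sum (f := fun j ↦ v j * v j) (fun j _ ↦ mul_self_nonneg (v j))
          (Finset.mem_univ i)
    _ = 1 := hv

theorem bddBelow_dotProduct_mulVec_image (M : Matrix n n ℝ) :
    BddBelow ((fun v : n → ℝ ↦ v ⬝ᵥ M *ᵥ v) '' {v | v ⬝ᵥ v = 1}) := by
  have hcont : Continuous fun v : n → ℝ ↦ v ⬝ᵥ M *ᵥ v := by fun_prop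
  refine ((isCompact_closedBall 0 1).bddBelow_image hcont.continuousOn).mono
    (Set.image_mono fun v hv ↦ ?_)
  exact mem_closedBall_zero_iff.2 (norm_le_one_of_dotProduct_self_eq_one hv)

theorem lambda2_le_dotProduct_mulVec (M : Matrix n n ℝ) {v : n → ℝ} (hunit : v ⬝ᵥ v = 1)
    (horth : v ⬝ᵥ 1 = 0) : lambda2 M ≤ v ⬝ᵥ M *ᵥ v := by
  refine csInf_le ((bddBelow_dotProduct_mulVec_image M).mono ?_) ⟨v, hunit, horth, rfl⟩
  rintro _ ⟨u, hu, -, rfl⟩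
  exact ⟨u, hu, rfl⟩

theorem lambda2_mul_dotProduct_self_le (M : Matrix n n ℝ) {v : n → ℝ} (hv : v ⬝ᵥ 1 = 0) :
    lambda2 M * (v ⬝ᵥ v) ≤ v ⬝ᵥ M *ᵥ v := by
  obtain rfl | hv0 := eq_or_ne v 0
  · simp
  have hpos : 0 < v ⬝ᵥ v := dotProduct_self_star_pos_iff.2 hv0
  set r := √(v ⬝ᵥ v)
  have hr0 : r ≠ 0 := (Real.sqrt_pos.2 hpos).ne'
  have hrr : v ⬝ᵥ v = r * r := (Real.mul_self_sqrt hpos.le).symm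
  have hunit : (r⁻¹ • v) ⬝ᵥ (r⁻¹ • v) = 1 := by
    rw [smul_dotProduct, dotProduct_smul, hrr, smul_eq_mul, smul_eq_mul]
    field_simp
  have horth : (r⁻¹ • v) ⬝ᵥ 1 = 0 := by rw [smul_dotProduct, hv, smul_zero]
  calc lambda2 M * (v ⬝ᵥ v)
      ≤ ((r⁻¹ • v) ⬝ᵥ M *ᵥ (r⁻¹ • v)) * (v ⬝ᵥ v) :=
        mul_le_mul_of_nonneg_right (lambda2_le_dotProduct_mulVec M hunit horth) hpos.le
    _ = v ⬝ᵥ M *ᵥ v := by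
        rw [hrr, mulVec_smul, smul_dotProduct, dotProduct_smul, smul_eq_mul, smul_eq_mul]
        field_simp

theorem dotProduct_mulVec_eq_zero_of_nonneg_on {A : Matrix n n ℝ} (hA : A.IsSymm)
    {S : Submodule ℝ (n → ℝ)} (hnonneg : ∀ v ∈ S, 0 ≤ v ⬝ᵥ A *ᵥ v) {u z : n → ℝ} (hu : u ∈ S)
    (hz : z ∈ S) (hzero : z ⬝ᵥ A *ᵥ z = 0) : u ⬝ᵥ A *ᵥ z = 0 := by
  classical
  have cauchy_schwarz := (A.toBilin'.restrict S).apply_sq_le_of_symm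
    (fun v ↦ by simpa [toBilin'_apply'] using hnonneg v v.2)
    (LinearMap.BilinForm.isSymm_iff.1 ((isSymm_toBilin'_iff_isSymm.2 hA).restrict S))
    ⟨u, hu⟩ ⟨z, hz⟩
  simpa [toBilin'_apply', hzero, sq_nonpos_iff] using cauchy_schwarz

theorem mulVec_eq_lambda2_smul_of_le {M : Matrix n n ℝ} (hM : M.IsSymm) (hM1 : M *ᵥ 1 = 0)
    {z : n → ℝ} (hz : z ⬝ᵥ 1 = 0) (hmin : z ⬝ᵥ M *ᵥ z ≤ lambda2 M * (z ⬝ᵥ z)) :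
    M *ᵥ z = lambda2 M • z := by
  classical
  set A := M - lambda2 M • (1 : Matrix n n ℝ) with hA
  have hA_mulVec (v : n → ℝ) : A *ᵥ v = M *ᵥ v - lambda2 M • v := by
    rw [hA, sub_mulVec, smul_mulVec, one_mulVec]
  have hA_form (v : n → ℝ) : v ⬝ᵥ A *ᵥ v = v ⬝ᵥ M *ᵥ v - lambda2 M * (v ⬝ᵥ v) := by
    rw [hA_mulVec, dotProduct_sub, dotProduct_smul, smul_eq_mul]
  let S : Submodule ℝ (n → ℝ) := LinearMap.ker (dotProductBilin ℝ ℝ 1)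
  have hmem {v : n → ℝ} : v ∈ S ↔ v ⬝ᵥ 1 = 0 := by
    simp [S, dotProduct_comm]
  have hmulVec_orth : A *ᵥ z ⬝ᵥ 1 = 0 := by
    rw [hA_mulVec, sub_dotProduct, smul_dotProduct, hz, smul_zero, sub_zero, dotProduct_comm,
      ← dotProduct_transpose_mulVec, hM.eq, hM1, dotProduct_zero]
  have hresidual : A *ᵥ z ⬝ᵥ A *ᵥ z = 0 :=
    dotProduct_mulVec_eq_zero_of_nonneg_on (hM.sub (isSymm_one.smul _))
      (fun v hv ↦ hA_form v ▸ sub_nonneg.2 (lambda2_mul_dotProduct_self_le M (hmem.1 hv)))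
      (hmem.2 hmulVec_orth) (hmem.2 hz)
      (hA_form z ▸ sub_eq_zero.2 (hmin.antisymm (lambda2_mul_dotProduct_self_le M hz)))
  rw [← sub_eq_zero, ← hA_mulVec]
  exact dotProduct_self_eq_zero.1 hresidual

end Rayleigh

section SupraLaplacian

variable {N : ℕ} {L₁ L₂ : Matrix (Fin N) (Fin N) ℝ}

theorem supraLaplacian_isSymm (hL₁ : L₁.IsSymm) (hL₂ : L₂.IsSymm) (w : Fin N → ℝ) :
    (supraLaplacian L₁ L₂ w).IsSymm :=
  (hL₁.add (isSymm_diagonal w)).fromBlocks (by simp) (hL₂.add (isSymm_diagonal w))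

theorem supraLaplacian_mulVec_sumElim (L₁ L₂ : Matrix (Fin N) (Fin N) ℝ) (w x y : Fin N → ℝ) :
    supraLaplacian L₁ L₂ w *ᵥ Sum.elim x y =
      Sum.elim (L₁ *ᵥ x + w * (x - y)) (L₂ *ᵥ y + w * (y - x)) := by
  have hdiag (v : Fin N → ℝ) : diagonal w *ᵥ v = w * v := funext (mulVec_diagonal w v)
  rw [supraLaplacian, fromBlocks_mulVec, Sum.elim_comp_inl, Sum.elim_comp_inr]
  simp only [add_mulVec, neg_mulVec, hdiag]
  congr 1 <;> ring

theorem supraLaplacian_mulVec_one (hL₁ : L₁ *ᵥ 1 = 0) (hL₂ : L₂ *ᵥ 1 = 0) (w : Fin N → ℝ) :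
    supraLaplacian L₁ L₂ w *ᵥ 1 = 0 := by
  rw [← Sum.elim_one_one, supraLaplacian_mulVec_sumElim, hL₁, hL₂]
  simp

theorem supraLaplacian_mulVec_sumElim_one_neg_one (hL₁ : L₁ *ᵥ 1 = 0) (hL₂ : L₂ *ᵥ 1 = 0)
    (w : Fin N → ℝ) :
    supraLaplacian L₁ L₂ w *ᵥ Sum.elim 1 (-1) = Sum.elim (2 * w) (-(2 * w)) := by
  rw [supraLaplacian_mulVec_sumElim, mulVec_neg, hL₁, hL₂]
  congr 1 <;> ring

end SupraLaplacian

theorem stmt4_general {N : ℕ} {L₁ L₂ : Matrix (Fin N) (Fin N) ℝ}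
    (hL₁ : L₁.IsSymm) (hL₂ : L₂.IsSymm) (hL₁1 : L₁ *ᵥ 1 = 0) (hL₂1 : L₂ *ᵥ 1 = 0)
    {w : Fin N → ℝ} {c : ℝ} (hc : c = ∑ i, w i)
    (hopt : 2 * c / N ≤ lambda2 (supraLaplacian L₁ L₂ w)) :
    w = fun _ ↦ c / N := by
  funext i
  have hN : (0 : ℝ) < N := Nat.cast_pos.2 i.pos
  set M := supraLaplacian L₁ L₂ w
  set z : Fin N ⊕ Fin N → ℝ := Sum.elim 1 (-1) with hz
  have hMz : M *ᵥ z = Sum.elim (2 * w) (-(2 * w)) :=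
    supraLaplacian_mulVec_sumElim_one_neg_one hL₁1 hL₂1 w
  have hmin : z ⬝ᵥ M *ᵥ z ≤ lambda2 M * (z ⬝ᵥ z) :=
    calc z ⬝ᵥ M *ᵥ z = 2 * c / N * (2 * N) := by
          rw [hMz, hz, sumElim_dotProduct_sumElim, neg_dotProduct_neg, one_dotProduct, hc]
          simp only [Pi.mul_apply, Pi.ofNat_apply, ← Finset.mul_sum]
          field_simp
          ring
      _ ≤ lambda2 M * (2 * N) := by gcongr
      _ = lambda2 M * (z ⬝ᵥ z) := by simp [hz, two_mul]
  have heigen : M *ᵥ z = lambda2 M • z :=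
    mulVec_eq_lambda2_smul_of_le (supraLaplacian_isSymm hL₁ hL₂ w)
      (supraLaplacian_mulVec_one hL₁1 hL₂1 w) (by simp [hz, dotProduct]) hmin
  have hw (j : Fin N) : 2 * w j = lambda2 M := by
    simpa [hz] using congrFun (hMz.symm.trans heigen) (Sum.inl j)
  have hconst (j : Fin N) : w j = w i := by linarith [hw i, hw j]
  rw [eq_div_iff hN.ne', hc, Finset.sum_congr rfl fun j _ ↦ hconst j]
  simp [mul_comm]

theorem stmt4 {N : ℕ} (hN : 1 ≤ N)
    (L₁ L₂ : Matrix (Fin N) (Fin N) ℝ)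
    (hL₁ : L₁.PosSemidef) (hL₂ : L₂.PosSemidef)
    (hL₁1 : L₁ *ᵥ (fun _ => 1) = 0) (hL₂1 : L₂ *ᵥ (fun _ => 1) = 0)
    (w : Fin N → ℝ) (hw : ∀ i, 0 ≤ w i) (c : ℝ) (hc : c = ∑ i, w i)
    (hopt : lambda2 (supraLaplacian L₁ L₂ w) = 2 * c / N) :
    w = fun _ => c / N := by
  exact stmt4_general (isHermitian_iff_isSymm.1 hL₁.isHermitian)
    (isHermitian_iff_isSymm.1 hL₂.isHermitian) hL₁1 hL₂1 hc hopt.ge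
end

section
/- Assume N ≥ 2 and that the two layers are identical, L₁ = L₂ = L₀. Then for every budget c ≥ 0, the uniform weights w = (c/N)𝟙 satisfy λ₂(L(w)) = min{2c/N, λ₂(L₀)}; hence the uniform weight distribution is optimal for every budget when the layers are identical. -/
open Matrix

/-!
In the coordinates `s = x + y`, `t = x - y` on pairs `(x, y)` of layer states, the quadratic form of
the supra-Laplacian with constant weight `d` splits as `½ sᵀL₀s + ½ (tᵀL₀t + 2d tᵀt)`, and
orthogonality to the all-ones vector constrains `s` only. The `s`-part contributes `λ₂(L₀)`. The
`t`-part contributes the minimum of the form of `L₀` over all unit vectors, shifted by `2d`; since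
`𝟙` is in the left and the right kernel of `L₀`, this is `min 0 (λ₂(L₀)) + 2d`.
-/

section QuadraticForm

variable {n R : Type*} [Fintype n] [CommRing R]

lemma smul_dotProduct_mulVec_smul (M : Matrix n n R) (r : R) (v : n → R) :
    (r • v) ⬝ᵥ M *ᵥ (r • v) = r ^ 2 * (v ⬝ᵥ M *ᵥ v) := by
  simp only [mulVec_smul, smul_dotProduct, dotProduct_smul, smul_eq_mul]
  ring

lemma dotProduct_mulVec_parallelogram (M : Matrix n n R) (x y : n → R) :
    (x + y) ⬝ᵥ M *ᵥ (x + y) + (x - y) ⬝ᵥ M *ᵥ (x - y)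
      = 2 * (x ⬝ᵥ M *ᵥ x + y ⬝ᵥ M *ᵥ y) := by
  simp only [mulVec_add, mulVec_sub, dotProduct_add, add_dotProduct, dotProduct_sub,
    sub_dotProduct]
  ring

lemma dotProduct_self_parallelogram (x y : n → R) :
    (x + y) ⬝ᵥ (x + y) + (x - y) ⬝ᵥ (x - y) = 2 * (x ⬝ᵥ x + y ⬝ᵥ y) := by
  classical
  simpa only [one_mulVec] using dotProduct_mulVec_parallelogram 1 x y

lemma add_smul_one_dotProduct_self {z : n → R} (hz : z ⬝ᵥ 1 = 0) (a : R) :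
    (z + a • 1) ⬝ᵥ (z + a • 1) = z ⬝ᵥ z + a ^ 2 * Fintype.card n := by
  have hz' : (1 : n → R) ⬝ᵥ z = 0 := by rw [dotProduct_comm, hz]
  simp only [add_dotProduct, dotProduct_add, smul_dotProduct, dotProduct_smul, hz, hz',
    one_dotProduct_one, smul_eq_mul]
  ring

lemma add_smul_one_dotProduct_mulVec_add_smul_one {M : Matrix n n R} (hM : M *ᵥ 1 = 0)
    (hM' : 1 ᵥ* M = 0) (z : n → R) (a : R) :
    (z + a • 1) ⬝ᵥ M *ᵥ (z + a • 1) = z ⬝ᵥ M *ᵥ z := by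
  have hone : (1 : n → R) ⬝ᵥ M *ᵥ z = 0 := by rw [dotProduct_mulVec, hM', zero_dotProduct]
  simp only [mulVec_add, mulVec_smul, hM, smul_zero, add_zero, add_dotProduct, smul_dotProduct,
    hone]

lemma sumElim_dotProduct_one (x y : n → R) :
    Sum.elim x y ⬝ᵥ 1 = (x + y) ⬝ᵥ 1 := by
  rw [← Sum.elim_one_one, sumElim_dotProduct_sumElim, add_dotProduct]

lemma exists_ne_zero_dotProduct_one_eq_zero [Nontrivial n] [Nontrivial R] :
    ∃ v : n → R, v ≠ 0 ∧ v ⬝ᵥ 1 = 0 := by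
  classical
  obtain ⟨i, j, hij⟩ := exists_pair_ne n
  refine ⟨Pi.single i 1 - Pi.single j 1, fun h => ?_, by simp [sub_dotProduct]⟩
  simpa [hij] using congrFun h i

lemma exists_eq_add_smul_one {K : Type*} [Field K] [CharZero K] [Nonempty n] (v : n → K) :
    ∃ (z : n → K) (a : K), z ⬝ᵥ 1 = 0 ∧ v = z + a • 1 := by
  have hcard : (Fintype.card n : K) ≠ 0 := Nat.cast_ne_zero.2 Fintype.card_ne_zero
  refine ⟨v - ((v ⬝ᵥ 1) / Fintype.card n) • 1, (v ⬝ᵥ 1) / Fintype.card n, ?_,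
    (sub_add_cancel _ _).symm⟩
  rw [sub_dotProduct, smul_dotProduct, one_dotProduct_one, smul_eq_mul, div_mul_cancel₀ _ hcard,
    sub_self]

end QuadraticForm

section Rayleigh

variable {n : Type*} [Fintype n]

lemma isCompact_setOf_dotProduct_self_eq_one : IsCompact {v : n → ℝ | v ⬝ᵥ v = 1} := by
  refine Metric.isCompact_of_isClosed_isBounded
    (isClosed_eq (by fun_prop) continuous_const)
    (isBounded_iff_forall_norm_le.2 ⟨1, fun v hv => ?_⟩)
  refine (pi_norm_le_iff_of_nonneg zero_le_one).2 fun i => abs_le_one_iff_mul_self_le_one.2 ?_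
  calc v i * v i ≤ v ⬝ᵥ v :=
        Finset.single_le_sum (fun j _ => mul_self_nonneg (v j)) (Finset.mem_univ i)
    _ = 1 := hv

lemma bddBelow_dotProduct_mulVec (M : Matrix n n ℝ) :
    BddBelow ((fun v => v ⬝ᵥ M *ᵥ v) '' {v : n → ℝ | v ⬝ᵥ v = 1}) :=
  isCompact_setOf_dotProduct_self_eq_one.bddBelow_image (by fun_prop)

lemma exists_pos_smul_dotProduct_self_eq_one {v : n → ℝ} (hv : v ≠ 0) :
    ∃ r : ℝ, 0 < r ∧ (r • v) ⬝ᵥ (r • v) = 1 := by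
  have hpos : 0 < v ⬝ᵥ v := dotProduct_self_star_pos_iff.2 hv
  refine ⟨(√(v ⬝ᵥ v))⁻¹, by positivity, ?_⟩
  rw [smul_dotProduct, dotProduct_smul, smul_smul, ← mul_inv, Real.mul_self_sqrt hpos.le,
    smul_eq_mul, inv_mul_cancel₀ hpos.ne']

end Rayleigh

section AlgebraicConnectivity

variable {n : Type*} [Fintype n] [Nontrivial n]

lemma le_lambda2_iff_forall_unit {M : Matrix n n ℝ} {m : ℝ} :
    m ≤ lambda2 M ↔ ∀ v : n → ℝ, v ⬝ᵥ v = 1 → v ⬝ᵥ 1 = 0 → m ≤ v ⬝ᵥ M *ᵥ v := by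
  obtain ⟨v, hv, hv1⟩ := exists_ne_zero_dotProduct_one_eq_zero (n := n) (R := ℝ)
  obtain ⟨r, -, hr⟩ := exists_pos_smul_dotProduct_self_eq_one hv
  have hne : {x : ℝ | ∃ v : n → ℝ, v ⬝ᵥ v = 1 ∧ v ⬝ᵥ 1 = 0 ∧ x = v ⬝ᵥ M *ᵥ v}.Nonempty :=
    ⟨_, r • v, hr, by rw [smul_dotProduct, hv1, smul_zero], rfl⟩
  have hbdd : BddBelow {x : ℝ | ∃ v : n → ℝ, v ⬝ᵥ v = 1 ∧ v ⬝ᵥ 1 = 0 ∧ x = v ⬝ᵥ M *ᵥ v} :=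
    (bddBelow_dotProduct_mulVec M).mono <| by
      rintro _ ⟨v, hv, -, rfl⟩
      exact ⟨v, hv, rfl⟩
  refine (le_csInf_iff hbdd hne).trans ⟨fun h v hv hv1 => h _ ⟨v, hv, hv1, rfl⟩, ?_⟩
  rintro h _ ⟨v, hv, hv1, rfl⟩
  exact h v hv hv1

lemma le_lambda2_iff {M : Matrix n n ℝ} {m : ℝ} :
    m ≤ lambda2 M ↔ ∀ v : n → ℝ, v ⬝ᵥ 1 = 0 → m * (v ⬝ᵥ v) ≤ v ⬝ᵥ M *ᵥ v := by
  rw [le_lambda2_iff_forall_unit]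
  refine ⟨fun h v hv1 => ?_, fun h v hv hv1 => by simpa only [hv, mul_one] using h v hv1⟩
  rcases eq_or_ne v 0 with rfl | hv
  · simp only [zero_dotProduct, mul_zero, le_refl]
  obtain ⟨r, hr0, hr⟩ := exists_pos_smul_dotProduct_self_eq_one hv
  have hscaled : m ≤ r ^ 2 * (v ⬝ᵥ M *ᵥ v) := by
    rw [← smul_dotProduct_mulVec_smul]
    exact h (r • v) hr (by rw [smul_dotProduct, hv1, smul_zero])
  have hnorm : r ^ 2 * (v ⬝ᵥ v) = 1 := by
    rw [← hr, smul_dotProduct, dotProduct_smul, smul_smul, smul_eq_mul, sq]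
  refine le_of_mul_le_mul_left ?_ (pow_pos hr0 2)
  calc r ^ 2 * (m * (v ⬝ᵥ v)) = m := by rw [mul_left_comm, hnorm, mul_one]
    _ ≤ r ^ 2 * (v ⬝ᵥ M *ᵥ v) := hscaled

lemma forall_mul_dotProduct_self_le_iff {M : Matrix n n ℝ} (hM : M *ᵥ 1 = 0)
    (hM' : 1 ᵥ* M = 0) {m : ℝ} :
    (∀ v : n → ℝ, m * (v ⬝ᵥ v) ≤ v ⬝ᵥ M *ᵥ v) ↔ m ≤ 0 ∧ m ≤ lambda2 M := by
  constructor
  · intro h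
    have hone : m * Fintype.card n ≤ 0 := by
      simpa only [hM, dotProduct_zero, one_dotProduct_one] using h 1
    exact ⟨nonpos_of_mul_nonpos_left hone (Nat.cast_pos.2 Fintype.card_pos),
      le_lambda2_iff.2 fun v _ => h v⟩
  · rintro ⟨hm, hmM⟩ v
    obtain ⟨z, a, hz, rfl⟩ := exists_eq_add_smul_one v
    rw [add_smul_one_dotProduct_self hz, add_smul_one_dotProduct_mulVec_add_smul_one hM hM',
      mul_add]
    exact add_le_of_le_of_nonpos (le_lambda2_iff.1 hmM z hz)
      (mul_nonpos_of_nonpos_of_nonneg hm (by positivity))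

end AlgebraicConnectivity

section SupraLaplacian

variable {N : ℕ}

lemma sumElim_dotProduct_supraLaplacian_mulVec (L₁ L₂ : Matrix (Fin N) (Fin N) ℝ)
    (w x y : Fin N → ℝ) :
    Sum.elim x y ⬝ᵥ supraLaplacian L₁ L₂ w *ᵥ Sum.elim x y
      = x ⬝ᵥ L₁ *ᵥ x + y ⬝ᵥ L₂ *ᵥ y + (x - y) ⬝ᵥ diagonal w *ᵥ (x - y) := by
  simp only [supraLaplacian, fromBlocks_mulVec, Sum.elim_comp_inl, Sum.elim_comp_inr,
    sumElim_dotProduct_sumElim, add_mulVec, neg_mulVec, mulVec_sub, dotProduct_add,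
    dotProduct_neg, dotProduct_sub, sub_dotProduct]
  ring

lemma le_lambda2_supraLaplacian_iff (hN : 2 ≤ N) {L : Matrix (Fin N) (Fin N) ℝ} {d m : ℝ} :
    m ≤ lambda2 (supraLaplacian L L fun _ => d) ↔
      m ≤ lambda2 L ∧ ∀ t : Fin N → ℝ, (m - 2 * d) * (t ⬝ᵥ t) ≤ t ⬝ᵥ L *ᵥ t := by
  have : Nontrivial (Fin N) := Fin.nontrivial_iff_two_le.2 hN
  have : Nontrivial (Fin N ⊕ Fin N) := Sum.inl_injective.nontrivial
  have hquad (x y : Fin N → ℝ) :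
      Sum.elim x y ⬝ᵥ supraLaplacian L L (fun _ => d) *ᵥ Sum.elim x y
        = x ⬝ᵥ L *ᵥ x + y ⬝ᵥ L *ᵥ y + d * ((x - y) ⬝ᵥ (x - y)) := by
    rw [sumElim_dotProduct_supraLaplacian_mulVec, diagonal_const_mulVec, dotProduct_smul,
      smul_eq_mul]
  simp only [le_lambda2_iff]
  refine ⟨fun h => ⟨fun s hs => ?_, fun t => ?_⟩, fun ⟨hs, ht⟩ u hu => ?_⟩
  · have hsym := h (Sum.elim s s) (by rw [sumElim_dotProduct_one, add_dotProduct, hs, add_zero])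
    rw [hquad, sumElim_dotProduct_sumElim, sub_self, dotProduct_zero] at hsym
    linarith
  · have hanti := h (Sum.elim t (-t)) (by
      rw [sumElim_dotProduct_one, add_neg_cancel, zero_dotProduct])
    simp only [hquad, sumElim_dotProduct_sumElim, sub_neg_eq_add, mulVec_neg, neg_dotProduct,
      dotProduct_neg, neg_neg, add_dotProduct, dotProduct_add] at hanti
    linarith
  · obtain ⟨x, y, rfl⟩ : ∃ x y, u = Sum.elim x y := ⟨_, _, (Sum.elim_comp_inl_inr u).symm⟩
    rw [sumElim_dotProduct_one] at hu
    rw [hquad, sumElim_dotProduct_sumElim]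
    have hadd := hs (x + y) hu
    have hsub := ht (x - y)
    have hform := dotProduct_mulVec_parallelogram L x y
    have hnorm : m * ((x + y) ⬝ᵥ (x + y)) + m * ((x - y) ⬝ᵥ (x - y))
        = 2 * (m * (x ⬝ᵥ x + y ⬝ᵥ y)) := by
      rw [← mul_add, dotProduct_self_parallelogram, mul_left_comm]
    linarith

end SupraLaplacian

theorem stmt11_general {N : ℕ} (hN : 2 ≤ N) {L₀ : Matrix (Fin N) (Fin N) ℝ}
    (hL₀ : L₀ *ᵥ 1 = 0) (hL₀' : 1 ᵥ* L₀ = 0) (d : ℝ) :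
    lambda2 (supraLaplacian L₀ L₀ fun _ => d)
      = min (2 * d) (min (lambda2 L₀) (lambda2 L₀ + 2 * d)) := by
  have : Nontrivial (Fin N) := Fin.nontrivial_iff_two_le.2 hN
  refine eq_of_forall_le_iff fun m => ?_
  rw [le_lambda2_supraLaplacian_iff hN, forall_mul_dotProduct_self_le_iff hL₀ hL₀', sub_nonpos,
    sub_le_iff_le_add, le_min_iff, le_min_iff, and_left_comm]

theorem stmt11 {N : ℕ} (hN : 2 ≤ N)
    (L₀ : Matrix (Fin N) (Fin N) ℝ)
    (hL₀ : L₀.PosSemidef) (hL₀1 : L₀ *ᵥ (fun _ => 1) = 0)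
    (c : ℝ) (hc : 0 ≤ c) :
    lambda2 (supraLaplacian L₀ L₀ (fun _ => c / N)) = min (2 * c / N) (lambda2 L₀) := by
  have hsymm : L₀ᵀ = L₀ := hL₀.isHermitian
  rw [stmt11_general hN hL₀1 (by rwa [← mulVec_transpose, hsymm]), mul_div_assoc,
    min_eq_left (le_add_of_nonneg_right (by positivity))]
end
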